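/- (Wong's inequality for q = ∞.) Let 0 < s < t be real numbers. Then for every ε > 0 there exists a constant C > 0 such that ‖J_{−s} φ‖_∞ ≤ ε ‖J_{−t} φ‖_∞ + C ‖φ‖_∞ for all φ ∈ 𝒮(ℝⁿ), where ‖·‖_∞ denotes the supremum norm. (This case follows from the quasinormability of the space 𝒟_{L¹}.) -/

import Mathlib

open MeasureTheory Complex
open scoped FourierTransform ENNReal SchwartzMap

/-- The Bessel potential `J_z f = 𝓕⁻¹((1+|ξ|²)^(-z/2) · 𝓕 f)` of a function on `ℝⁿ`. -/
noncomputable def besselPotential (n : ℕ) (z : ℂ)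
    (f : EuclideanSpace ℝ (Fin n) → ℂ) : EuclideanSpace ℝ (Fin n) → ℂ :=
  𝓕⁻ (fun ξ => ((1 : ℂ) + (‖ξ‖ : ℂ) ^ 2) ^ (-z / 2) * 𝓕 f ξ)

variable {V : Type*} [NormedAddCommGroup V] [InnerProductSpace ℝ V]

/-- The Gaussian as a Schwartz function. -/
theorem exists_schwartzMap_eq_exp_neg_mul_norm_sq {δ : ℝ} (hδ : 0 < δ) :
    ∃ g : 𝓢(V, ℂ), ∀ x, g x = (Real.exp (-(δ * ‖x‖ ^ 2)) : ℂ) := by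
  have hw : (fun x : V ↦ -(δ * ‖x‖ ^ 2)).HasTemperateGrowth := by fun_prop
  have hsmooth : ContDiff ℝ (⊤ : ℕ∞) (fun x : V ↦ Real.exp (-(δ * ‖x‖ ^ 2))) :=
    Real.contDiff_exp.comp hw.1
  have hdecay (k : ℕ) : ∃ C : ℝ, ∀ x : V, (1 + ‖x‖) ^ k * Real.exp (-(δ * ‖x‖ ^ 2)) ≤ C := by
    refine ⟨k.factorial * Real.exp (1 + 1 / (4 * δ)), fun x ↦ ?_⟩
    have h1 := Real.pow_div_factorial_le_exp (1 + ‖x‖) (by positivity) k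
    rw [div_le_iff₀ (by positivity)] at h1
    have h2 : 1 + ‖x‖ + -(δ * ‖x‖ ^ 2) ≤ 1 + 1 / (4 * δ) := by
      have : 1 / (4 * δ) - ‖x‖ + δ * ‖x‖ ^ 2 = (2 * δ * ‖x‖ - 1) ^ 2 / (4 * δ) := by
        field_simp
        ring
      have : 0 ≤ (2 * δ * ‖x‖ - 1) ^ 2 / (4 * δ) := by positivity
      linarith
    calc (1 + ‖x‖) ^ k * Real.exp (-(δ * ‖x‖ ^ 2))
        ≤ (Real.exp (1 + ‖x‖) * k.factorial) * Real.exp (-(δ * ‖x‖ ^ 2)) := by gcongr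
      _ = k.factorial * Real.exp (1 + ‖x‖ + -(δ * ‖x‖ ^ 2)) := by rw [Real.exp_add (1 + ‖x‖)]; ring
      _ ≤ _ := by gcongr
  let g : 𝓢(V, ℝ) :=
    { toFun := fun x ↦ Real.exp (-(δ * ‖x‖ ^ 2))
      smooth' := hsmooth
      decay' := by
        intro k n
        obtain ⟨l, C, hC, hbound⟩ := hw.norm_iteratedFDeriv_le_uniform n
        obtain ⟨B, hB⟩ := hdecay (k + l * n)
        refine ⟨n.factorial * (max 1 C) ^ n * B, fun x ↦ ?_⟩
        have hcomp := norm_iteratedFDeriv_comp_le (𝕜 := ℝ) (n := n) (N := (⊤ : ℕ∞))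
          (Real.contDiff_exp (n := (⊤ : ℕ∞))) hw.1
          (by exact_mod_cast le_top) x
          (C := Real.exp (-(δ * ‖x‖ ^ 2))) (D := max 1 C * (1 + ‖x‖) ^ l)
          (fun i _ ↦ by
            rw [norm_iteratedFDeriv_eq_norm_iteratedDeriv, iteratedDeriv_eq_iterate,
              Real.iter_deriv_exp, Real.norm_eq_abs, Real.abs_exp])
          (fun i hi hin ↦ by
            have h1 : 1 ≤ max 1 C * (1 + ‖x‖) ^ l :=
              one_le_mul_of_one_le_of_one_le (le_max_left _ _)
                (one_le_pow₀ (by linarith [norm_nonneg x]))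
            calc _ ≤ C * (1 + ‖x‖) ^ l := hbound i hin x
              _ ≤ max 1 C * (1 + ‖x‖) ^ l := by gcongr; exact le_max_right _ _
              _ ≤ _ := le_self_pow₀ h1 (by lia))
        have hxk : ‖x‖ ^ k ≤ (1 + ‖x‖) ^ k := by gcongr; linarith
        calc ‖x‖ ^ k * ‖iteratedFDeriv ℝ n (fun x : V ↦ Real.exp (-(δ * ‖x‖ ^ 2))) x‖
            ≤ (1 + ‖x‖) ^ k * (n.factorial * Real.exp (-(δ * ‖x‖ ^ 2)) *
              (max 1 C * (1 + ‖x‖) ^ l) ^ n) := by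
                gcongr
                exact hcomp
          _ = n.factorial * (max 1 C) ^ n *
              ((1 + ‖x‖) ^ (k + l * n) * Real.exp (-(δ * ‖x‖ ^ 2))) := by
                rw [mul_pow, pow_add, pow_mul]; ring
          _ ≤ _ := by gcongr; exact hB x }
  exact ⟨g.postcompCLM Complex.ofRealCLM, fun x ↦ rfl⟩

variable [FiniteDimensional ℝ V] [MeasurableSpace V] [BorelSpace V]

/-- A Fourier multiplier whose symbol has an integrable Fourier transform is bounded in the
supremum norm. -/
theorem norm_fourierInv_mul_fourier_le {g φ : V → ℂ} (hg : Integrable g) (hg' : Integrable (𝓕 g))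
    (hφ : Integrable φ) {M : ℝ} (hM : ∀ᵐ y, ‖φ y‖ ≤ M) (x : V) :
    ‖𝓕⁻ (fun ξ ↦ g ξ * 𝓕 φ ξ) x‖ ≤ (∫ ξ, ‖𝓕 g ξ‖) * M := by
  set G : V → ℂ := fun ξ ↦ 𝐞 (inner ℝ ξ x) • g ξ with hG
  have hGi : Integrable G := by
    have := (Real.fourierIntegral_convergent_iff (μ := volume) (f := g) (-x)).2 hg
    simpa [hG] using this
  have hGF (y : V) : 𝓕 G y = 𝓕 g (y - x) := by
    rw [Real.fourier_eq, Real.fourier_eq]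
    congr 1
    ext ξ
    rw [hG, smul_smul, ← AddChar.map_add_eq_mul, inner_sub_right]
    congr 2
    ring
  have key : 𝓕⁻ (fun ξ ↦ g ξ * 𝓕 φ ξ) x = ∫ y, 𝓕 g (y - x) * φ y := by
    have := VectorFourier.integral_fourierIntegral_smul_eq_flip (L := innerₗ V)
      (μ := volume) (ν := volume) Real.continuous_fourierChar continuous_inner hGi hφ
    rw [Real.fourierInv_eq]
    simp_rw [← hGF]
    convert! this.symm using 2
    ext ξ
    simp only [hG, Circle.smul_def, smul_eq_mul, mul_assoc, flip_innerₗ]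
    rfl
  rw [key, ← integral_sub_right_eq_self (fun y ↦ ‖𝓕 g y‖) x, ← integral_mul_const]
  refine norm_integral_le_of_norm_le ((hg'.norm.comp_sub_right x).mul_const M) ?_
  filter_upwards [hM] with y hy
  rw [norm_mul]
  gcongr

/-- Gaussian multipliers are contractions in the supremum norm. -/
theorem norm_fourierInv_gaussian_mul_fourier_le {φ : V → ℂ} {τ : ℝ} (hτ : 0 < τ)
    (hφ : Integrable φ) {M : ℝ} (hM : ∀ᵐ y, ‖φ y‖ ≤ M) (x : V) :
    ‖𝓕⁻ (fun ξ ↦ (Real.exp (-(τ * ‖ξ‖ ^ 2)) : ℂ) * 𝓕 φ ξ) x‖ ≤ M := by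
  obtain ⟨g, hg⟩ := exists_schwartzMap_eq_exp_neg_mul_norm_sq (V := V) hτ
  have hF (y : V) : ‖𝓕 (g : V → ℂ) y‖ =
      (Real.pi / τ) ^ (Module.finrank ℝ V / 2 : ℝ) * Real.exp (-(Real.pi ^ 2 / τ) * ‖y‖ ^ 2) := by
    have h := fourier_gaussian_innerProductSpace (b := (τ : ℂ)) (by simpa using hτ) y
    have hgf : (g : V → ℂ) = fun v ↦ cexp (-(τ : ℂ) * (‖v‖ : ℂ) ^ 2) := by
      ext v
      rw [hg]
      push_cast
      ring_nf
    rw [hgf, h, norm_mul, Complex.norm_exp]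
    congr 1
    · have : ((Real.pi : ℂ) / τ) = ((Real.pi / τ : ℝ) : ℂ) := by push_cast; rfl
      rw [this, Complex.norm_cpow_eq_rpow_re_of_pos (by positivity)]
      congr 1
      simp
    · congr 1
      have : -(Real.pi : ℂ) ^ 2 * (‖y‖ : ℂ) ^ 2 / τ = ((-(Real.pi ^ 2 / τ) * ‖y‖ ^ 2 : ℝ) : ℂ) := by
        push_cast; ring
      rw [this, Complex.ofReal_re]
  have hint : ∫ y, ‖𝓕 (g : V → ℂ) y‖ = 1 := by
    simp_rw [hF]
    rw [integral_const_mul, GaussianFourier.integral_rexp_neg_mul_sq_norm (by positivity),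
      ← Real.mul_rpow (by positivity) (by positivity)]
    have : Real.pi / τ * (Real.pi / (Real.pi ^ 2 / τ)) = 1 := by
      field_simp
    rw [this, Real.one_rpow]
  have h := norm_fourierInv_mul_fourier_le g.integrable (𝓕 g).integrable hφ hM x
  rw [hint, one_mul] at h
  simpa only [hg] using h

/-- Negative powers of `1 + ‖ξ‖²` as superpositions of Gaussian multipliers. -/
theorem Gamma_mul_fourierInv_one_add_norm_sq_rpow_neg_mul {c : ℝ} (hc : 0 < c) {h : V → ℂ}
    (hh : Integrable h) (x : V) :
    (Real.Gamma c : ℂ) * 𝓕⁻ (fun ξ ↦ (((1 + ‖ξ‖ ^ 2) ^ (-c) : ℝ) : ℂ) * h ξ) x =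
      ∫ τ in Set.Ioi (0 : ℝ), ((τ ^ (c - 1) : ℝ) : ℂ) *
        𝓕⁻ (fun ξ ↦ (Real.exp (-(τ * (1 + ‖ξ‖ ^ 2))) : ℂ) * h ξ) x := by
  simp_rw [Real.fourierInv_eq, ← integral_const_mul]
  rw [integral_integral_swap]
  · refine integral_congr_ae (Filter.Eventually.of_forall fun ξ ↦ ?_)
    have hpos : 0 < 1 + ‖ξ‖ ^ 2 := by positivity
    have hGamma := Real.integral_rpow_mul_exp_neg_mul_Ioi hc hpos
    have hrw : ∀ τ : ℝ, ((τ ^ (c - 1) : ℝ) : ℂ) *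
        (𝐞 (inner ℝ ξ x) • ((Real.exp (-(τ * (1 + ‖ξ‖ ^ 2))) : ℂ) * h ξ)) =
        ((τ ^ (c - 1) * Real.exp (-((1 + ‖ξ‖ ^ 2) * τ)) : ℝ) : ℂ) * (𝐞 (inner ℝ ξ x) • h ξ) := by
      intro τ
      rw [mul_comm (1 + ‖ξ‖ ^ 2) τ]
      simp only [Circle.smul_def, smul_eq_mul]
      push_cast
      ring
    simp only [hrw]
    rw [integral_mul_const, integral_complex_ofReal, hGamma, one_div,
      Real.inv_rpow hpos.le, ← Real.rpow_neg hpos.le]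
    simp only [Circle.smul_def, smul_eq_mul]
    push_cast
    ring
  · have hdom : Integrable (fun p : ℝ × V ↦ (Real.exp (-p.1) * p.1 ^ (c - 1)) * ‖h p.2‖)
        ((volume.restrict (Set.Ioi (0 : ℝ))).prod volume) :=
      Integrable.mul_prod (Real.GammaIntegral_convergent hc) hh.norm
    refine hdom.mono' ?_ ?_
    · have h1 : AEStronglyMeasurable (fun p : ℝ × V ↦ h p.2)
          ((volume.restrict (Set.Ioi (0 : ℝ))).prod volume) := hh.1.comp_snd
      have h2 : Measurable (fun p : ℝ × V ↦ ((p.1 ^ (c - 1) : ℝ) : ℂ)) := by fun_prop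
      have h3 : Continuous (fun p : ℝ × V ↦ (Real.exp (-(p.1 * (1 + ‖p.2‖ ^ 2))) : ℂ)) := by
        fun_prop
      have h4 : Continuous (fun p : ℝ × V ↦ ((𝐞 (inner ℝ p.2 x) : Circle) : ℂ)) := by
        have := Real.continuous_fourierChar
        fun_prop
      exact h2.aestronglyMeasurable.mul
        (h4.aestronglyMeasurable.mul (h3.aestronglyMeasurable.mul h1))
    · have hae : ∀ᵐ p ∂((volume.restrict (Set.Ioi (0 : ℝ))).prod (volume : Measure V)),
          p.1 ∈ Set.Ioi (0 : ℝ) :=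
        Measure.quasiMeasurePreserving_fst.ae (ae_restrict_mem measurableSet_Ioi)
      filter_upwards [hae] with p hp
      have hp : 0 < p.1 := hp
      simp only [Function.uncurry, norm_mul, Circle.norm_smul, Complex.norm_real, Real.norm_eq_abs,
        Real.abs_exp, abs_of_nonneg (Real.rpow_nonneg hp.le _)]
      rw [← mul_assoc, mul_comm (Real.exp _)]
      gcongr
      nlinarith [sq_nonneg ‖p.2‖]

/-- Powers of `1 + ‖ξ‖²` damped by a Gaussian are bounded multipliers in the supremum norm. -/
theorem exists_norm_fourierInv_gaussian_mul_rpow_mul_fourier_le (b : ℝ) {δ : ℝ} (hδ : 0 < δ) :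
    ∃ K : ℝ, 0 ≤ K ∧ ∀ (φ : V → ℂ), Integrable φ → ∀ M : ℝ, (∀ᵐ y, ‖φ y‖ ≤ M) → ∀ x : V,
      ‖𝓕⁻ (fun ξ ↦ (Real.exp (-(δ * ‖ξ‖ ^ 2)) : ℂ) * ((((1 + ‖ξ‖ ^ 2) ^ b : ℝ) : ℂ) * 𝓕 φ ξ)) x‖
        ≤ K * M := by
  obtain ⟨g, hg⟩ := exists_schwartzMap_eq_exp_neg_mul_norm_sq (V := V) hδ
  have hw : (fun ξ : V ↦ (((1 + ‖ξ‖ ^ 2) ^ b : ℝ) : ℂ)).HasTemperateGrowth := by fun_prop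
  set G := SchwartzMap.smulLeftCLM ℂ (fun ξ : V ↦ (((1 + ‖ξ‖ ^ 2) ^ b : ℝ) : ℂ)) g with hG
  refine ⟨∫ ξ, ‖𝓕 (G : V → ℂ) ξ‖, by positivity, fun φ hφ M hM x ↦ ?_⟩
  have h := norm_fourierInv_mul_fourier_le G.integrable (𝓕 G).integrable hφ hM x
  simpa only [hG, SchwartzMap.smulLeftCLM_apply_apply hw, smul_eq_mul, hg, mul_assoc,
    mul_left_comm] using h

/-- Interpolation in the supremum norm between the multipliers `(1 + ‖ξ‖²) ^ a`,
`(1 + ‖ξ‖²) ^ b` and `1`. -/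
theorem exists_norm_fourierInv_rpow_mul_fourier_le {a b : ℝ} (hab : a < b) {ε : ℝ} (hε : 0 < ε) :
    ∃ C : ℝ, 0 < C ∧ ∀ (φ : 𝓢(V, ℂ)) (M N : ℝ), (∀ᵐ y, ‖φ y‖ ≤ M) →
      (∀ᵐ y, ‖𝓕⁻ (fun ξ : V ↦ (((1 + ‖ξ‖ ^ 2) ^ b : ℝ) : ℂ) * 𝓕 (φ : V → ℂ) ξ) y‖ ≤ N) →
      ∀ x : V, ‖𝓕⁻ (fun ξ : V ↦ (((1 + ‖ξ‖ ^ 2) ^ a : ℝ) : ℂ) * 𝓕 (φ : V → ℂ) ξ) x‖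
        ≤ ε * N + C * M := by
  obtain ⟨c, hc, hcdef⟩ : ∃ c : ℝ, 0 < c ∧ c = b - a := ⟨b - a, by linarith, rfl⟩
  have hΓ : 0 < Real.Gamma c := Real.Gamma_pos_of_pos hc
  set δ : ℝ := (ε * c * Real.Gamma c) ^ c⁻¹ with hδdef
  have hδ : 0 < δ := by positivity
  have hδc : δ ^ c = ε * c * Real.Gamma c := by
    rw [hδdef, ← Real.rpow_mul (by positivity), inv_mul_cancel₀ hc.ne', Real.rpow_one]
  obtain ⟨K, hK, hKbound⟩ :=
    exists_norm_fourierInv_gaussian_mul_rpow_mul_fourier_le (V := V) b hδ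
  refine ⟨K + 1, by linarith, fun φ M N hM hN x ↦ ?_⟩
  have hM0 : 0 ≤ M := by
    obtain ⟨y, hy⟩ := hM.exists
    exact (norm_nonneg _).trans hy
  have hN0 : 0 ≤ N := by
    obtain ⟨y, hy⟩ := hN.exists
    exact (norm_nonneg _).trans hy
  have hw : (fun ξ : V ↦ (((1 + ‖ξ‖ ^ 2) ^ b : ℝ) : ℂ)).HasTemperateGrowth := by fun_prop
  obtain ⟨g, hg⟩ := exists_schwartzMap_eq_exp_neg_mul_norm_sq (V := V) hδ
  -- `h` is the Fourier transform of `J_{-2b} φ`, and `k` that of its Gaussian regularization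
  set h : 𝓢(V, ℂ) := SchwartzMap.smulLeftCLM ℂ (fun ξ : V ↦ (((1 + ‖ξ‖ ^ 2) ^ b : ℝ) : ℂ)) (𝓕 φ)
    with hh
  set k : 𝓢(V, ℂ) := SchwartzMap.smulLeftCLM ℂ (g : V → ℂ) h with hk
  have hh_apply (ξ : V) : h ξ = (((1 + ‖ξ‖ ^ 2) ^ b : ℝ) : ℂ) * 𝓕 (φ : V → ℂ) ξ := by
    rw [hh, SchwartzMap.smulLeftCLM_apply_apply hw, smul_eq_mul, SchwartzMap.fourier_coe]
  have hk_apply (ξ : V) : k ξ = (Real.exp (-(δ * ‖ξ‖ ^ 2)) : ℂ) * h ξ := by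
    rw [hk, SchwartzMap.smulLeftCLM_apply_apply g.hasTemperateGrowth, smul_eq_mul, hg]
  have hinv (f : 𝓢(V, ℂ)) : 𝓕 ((𝓕⁻ f : 𝓢(V, ℂ)) : V → ℂ) = f := by
    rw [← SchwartzMap.fourier_coe, FourierTransform.fourier_fourierInv_eq]
  have hhN : ∀ᵐ y, ‖(𝓕⁻ h : 𝓢(V, ℂ)) y‖ ≤ N := by
    simpa only [SchwartzMap.fourierInv_coe, funext hh_apply] using hN
  have hkM : ∀ y, ‖(𝓕⁻ k : 𝓢(V, ℂ)) y‖ ≤ K * M := fun y ↦ by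
    have := hKbound φ φ.integrable M hM y
    rw [SchwartzMap.fourierInv_coe, funext hk_apply]
    simpa only [hh_apply] using this
  set S : ℝ → ℂ := fun τ ↦ 𝓕⁻ (fun ξ ↦ (Real.exp (-(τ * (1 + ‖ξ‖ ^ 2))) : ℂ) * h ξ) x with hS
  have hpull (r : ℝ) (f : V → ℂ) : ‖𝓕⁻ (fun ξ ↦ (Real.exp (-r) : ℂ) * f ξ) x‖ =
      Real.exp (-r) * ‖𝓕⁻ f x‖ := by
    have : 𝓕⁻ (fun ξ ↦ (Real.exp (-r) : ℂ) * f ξ) x = (Real.exp (-r) : ℂ) * 𝓕⁻ f x := by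
      rw [Real.fourierInv_eq, Real.fourierInv_eq, ← integral_const_mul]
      congr 1
      ext ξ
      simp only [Circle.smul_def, smul_eq_mul]
      ring
    rw [this, norm_mul, Complex.norm_real, Real.norm_eq_abs, Real.abs_exp]
  have hS_small {τ : ℝ} (hτ : 0 < τ) : ‖S τ‖ ≤ N := by
    have hheat := norm_fourierInv_gaussian_mul_fourier_le hτ
      (𝓕⁻ h : 𝓢(V, ℂ)).integrable hhN x
    rw [hinv] at hheat
    have hSτ : ‖S τ‖ = Real.exp (-τ) *
        ‖𝓕⁻ (fun ξ ↦ (Real.exp (-(τ * ‖ξ‖ ^ 2)) : ℂ) * h ξ) x‖ := by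
      rw [← hpull, hS]
      refine congrArg (fun f : V → ℂ ↦ ‖𝓕⁻ f x‖) (funext fun ξ ↦ ?_)
      rw [← mul_assoc, ← Complex.ofReal_mul, ← Real.exp_add]
      ring_nf
    rw [hSτ]
    exact (mul_le_of_le_one_left (norm_nonneg _) (by simpa using hτ.le)).trans hheat
  have hS_large {τ : ℝ} (hτ : δ < τ) : ‖S τ‖ ≤ Real.exp (-τ) * (K * M) := by
    have hheat := norm_fourierInv_gaussian_mul_fourier_le (sub_pos.2 hτ)
      (𝓕⁻ k : 𝓢(V, ℂ)).integrable (Filter.Eventually.of_forall hkM) x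
    rw [hinv] at hheat
    have hSτ : ‖S τ‖ = Real.exp (-τ) *
        ‖𝓕⁻ (fun ξ ↦ (Real.exp (-((τ - δ) * ‖ξ‖ ^ 2)) : ℂ) * k ξ) x‖ := by
      rw [← hpull, hS]
      refine congrArg (fun f : V → ℂ ↦ ‖𝓕⁻ f x‖) (funext fun ξ ↦ ?_)
      rw [hk_apply, ← mul_assoc, ← mul_assoc, ← Complex.ofReal_mul, ← Complex.ofReal_mul,
        ← Real.exp_add, ← Real.exp_add]
      ring_nf
    rw [hSτ]
    gcongr
  have hsub : (Real.Gamma c : ℂ) *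
      𝓕⁻ (fun ξ : V ↦ (((1 + ‖ξ‖ ^ 2) ^ a : ℝ) : ℂ) * 𝓕 (φ : V → ℂ) ξ) x =
      ∫ τ in Set.Ioi (0 : ℝ), ((τ ^ (c - 1) : ℝ) : ℂ) * S τ := by
    rw [← Gamma_mul_fourierInv_one_add_norm_sq_rpow_neg_mul hc h.integrable x]
    refine congrArg (fun f : V → ℂ ↦ (Real.Gamma c : ℂ) * 𝓕⁻ f x) (funext fun ξ ↦ ?_)
    rw [hh_apply, ← mul_assoc, ← Complex.ofReal_mul, ← Real.rpow_add (by positivity)]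
    congr 4
    linarith
  have hint₁ : IntegrableOn (fun τ : ℝ ↦ τ ^ (c - 1)) (Set.Ioc 0 δ) := by
    rw [← intervalIntegrable_iff_integrableOn_Ioc_of_le hδ.le]
    exact intervalIntegral.intervalIntegrable_rpow' (by linarith)
  have hint₂ := Real.GammaIntegral_convergent hc
  have hval₁ : ∫ τ in Set.Ioc 0 δ, τ ^ (c - 1) = ε * Real.Gamma c := by
    rw [← intervalIntegral.integral_of_le hδ.le, integral_rpow (Or.inl (by linarith)),
      sub_add_cancel, Real.zero_rpow hc.ne', hδc]
    field_simp
    ring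
  have hbound : ‖∫ τ in Set.Ioi (0 : ℝ), ((τ ^ (c - 1) : ℝ) : ℂ) * S τ‖ ≤
      ∫ τ in Set.Ioi (0 : ℝ), ((Set.Ioc 0 δ).indicator (fun τ ↦ τ ^ (c - 1)) τ * N +
        Real.exp (-τ) * τ ^ (c - 1) * (K * M)) := by
    refine norm_integral_le_of_norm_le ?_ ?_
    · exact ((hint₁.integrable_indicator measurableSet_Ioc).integrableOn.mul_const N).add
        (hint₂.mul_const _)
    · filter_upwards [ae_restrict_mem measurableSet_Ioi] with τ hτ
      have hτ : 0 < τ := hτ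
      have hτc : 0 ≤ τ ^ (c - 1) := by positivity
      rw [norm_mul, Complex.norm_real, Real.norm_of_nonneg hτc]
      rcases le_or_gt τ δ with hle | hlt
      · rw [Set.indicator_of_mem (show τ ∈ Set.Ioc 0 δ from ⟨hτ, hle⟩)]
        have := mul_le_mul_of_nonneg_left (hS_small hτ) hτc
        have : 0 ≤ Real.exp (-τ) * τ ^ (c - 1) * (K * M) := by positivity
        linarith
      · rw [Set.indicator_of_notMem (fun hmem ↦ hlt.not_ge hmem.2), zero_mul, zero_add]
        calc _ ≤ τ ^ (c - 1) * (Real.exp (-τ) * (K * M)) := by gcongr; exact hS_large hlt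
          _ = _ := by ring
  rw [integral_add ((hint₁.integrable_indicator measurableSet_Ioc).integrableOn.mul_const N)
    (hint₂.mul_const _), integral_mul_const, integral_mul_const,
    ← Real.Gamma_eq_integral hc, setIntegral_indicator measurableSet_Ioc,
    Set.inter_eq_self_of_subset_right Set.Ioc_subset_Ioi_self, hval₁, ← hsub, norm_mul,
    Complex.norm_real, Real.norm_of_nonneg hΓ.le] at hbound
  have : Real.Gamma c *
      ‖𝓕⁻ (fun ξ : V ↦ (((1 + ‖ξ‖ ^ 2) ^ a : ℝ) : ℂ) * 𝓕 (φ : V → ℂ) ξ) x‖ ≤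
      Real.Gamma c * (ε * N + K * M) := by linarith
  have := le_of_mul_le_mul_left this hΓ
  linarith

theorem besselPotential_neg_ofReal (n : ℕ) (r : ℝ) (f : EuclideanSpace ℝ (Fin n) → ℂ) :
    besselPotential n (-(r : ℂ)) f =
      𝓕⁻ (fun ξ ↦ (((1 + ‖ξ‖ ^ 2) ^ (r / 2) : ℝ) : ℂ) * 𝓕 f ξ) := by
  rw [besselPotential]
  congr 1
  ext ξ
  rw [Complex.ofReal_cpow (by positivity)]
  push_cast
  rw [neg_neg]

/-- Wong's inequality for `q = ∞`: for `0 < s < t` and every `ε > 0` there is `C > 0`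
with `‖J_{-s} φ‖_∞ ≤ ε ‖J_{-t} φ‖_∞ + C ‖φ‖_∞` for all Schwartz `φ`. -/
theorem wong_inequality_infty (n : ℕ) (s t : ℝ) (hs : 0 < s) (hst : s < t) :
    ∀ ε : ℝ, 0 < ε → ∃ C : ℝ, 0 < C ∧
      ∀ φ : 𝓢(EuclideanSpace ℝ (Fin n), ℂ),
        eLpNorm (besselPotential n (-(s : ℂ)) ⇑φ) ∞ volume ≤
          ENNReal.ofReal ε * eLpNorm (besselPotential n (-(t : ℂ)) ⇑φ) ∞ volume +
            ENNReal.ofReal C * eLpNorm (⇑φ) ∞ volume := by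
  intro ε hε
  obtain ⟨C, hC, hbound⟩ := exists_norm_fourierInv_rpow_mul_fourier_le
    (V := EuclideanSpace ℝ (Fin n)) (div_lt_div_of_pos_right hst two_pos) hε
  refine ⟨C, hC, fun φ ↦ ?_⟩
  simp_rw [← besselPotential_neg_ofReal] at hbound
  simp only [eLpNorm_exponent_top]
  have hae {f : EuclideanSpace ℝ (Fin n) → ℂ} (hf : eLpNormEssSup f volume ≠ ∞) :
      ∀ᵐ y, ‖f y‖ ≤ (eLpNormEssSup f volume).toReal := by
    filter_upwards [ae_le_eLpNormEssSup (f := f) (μ := volume)] with y hy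
    rw [← toReal_enorm]
    exact ENNReal.toReal_mono hf hy
  have hφ : eLpNormEssSup φ volume ≠ ∞ :=
    (eLpNormEssSup_lt_top_of_ae_bound
      (Filter.Eventually.of_forall (φ.norm_le_seminorm ℝ))).ne
  by_cases hN : eLpNormEssSup (besselPotential n (-(t : ℂ)) φ) volume = ∞
  · rw [hN, ENNReal.mul_top (by simpa using hε), top_add]
    exact le_top
  · refine (eLpNormEssSup_le_of_ae_bound
      (Filter.Eventually.of_forall (hbound φ _ _ (hae hφ) (hae hN)))).trans ?_
    rw [ENNReal.ofReal_add (mul_nonneg hε.le ENNReal.toReal_nonneg)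
      (mul_nonneg hC.le ENNReal.toReal_nonneg), ENNReal.ofReal_mul hε.le,
      ENNReal.ofReal_mul hC.le, ENNReal.ofReal_toReal hφ, ENNReal.ofReal_toReal hN]
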